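/- Let c ∈ ℝ with -1 < c < 0. For every z ∈ S, the sup-norm ‖fⁿ(z)‖∞ diverges to +∞ as n → +∞. -/

import Mathlib

open Set Filter Topology

/-- The map `f(x,y) = (xy + c, x)`. -/
noncomputable def fc (c : ℝ) : ℝ × ℝ → ℝ × ℝ := fun z => (z.1 * z.2 + c, z.1)

/-- `a₁ = (1 - √(1-4c))/2`. -/
noncomputable def a1 (c : ℝ) : ℝ := (1 - Real.sqrt (1 - 4 * c)) / 2

/-- `a₂ = (1 + √(1-4c))/2`. -/
noncomputable def a2 (c : ℝ) : ℝ := (1 + Real.sqrt (1 - 4 * c)) / 2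

/-!
The mean of the coordinates measures how far a point of `L` is from the fixed point `θ`, and each
application of `f` multiplies this excess by at least `a₂ > 1`. The map carries the other three
regions cyclically into each other, `N → P → M → N`, along the cycle `p → f(p) → f²(p) → p`, and on
`N` the excess `-1 - (x + y) / 2` at least doubles under `f³`. Finally `f` is injective off the
line `x = 0`, so points of `M` and `P` outside the cycle reach `N` without landing on `p`.
-/

theorem tendsto_iterate_atTop_of_mul_le {X : Type*} {f : X → X} {A : Set X} {V g : X → ℝ}
    {k : ℕ} {r : ℝ} (hk : k ≠ 0) (hr : 1 < r) (hA : MapsTo f^[k] A A)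
    (hV : ∀ x ∈ A, r * V x ≤ V (f^[k] x)) (hVg : ∀ x ∈ A, ∀ i < k, V x ≤ g (f^[i] x))
    {x : X} (hx : x ∈ A) (hpos : 0 < V x) :
    Tendsto (fun n => g (f^[n] x)) atTop atTop := by
  have orbit_mem (m : ℕ) : (f^[k])^[m] x ∈ A := hA.iterate m hx
  have growth (m : ℕ) : r ^ m * V x ≤ V ((f^[k])^[m] x) := by
    induction m with
    | zero => simp
    | succ m ih =>
      calc r ^ (m + 1) * V x = r * (r ^ m * V x) := by ring
        _ ≤ r * V ((f^[k])^[m] x) := by gcongr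
        _ ≤ V ((f^[k])^[m + 1] x) := by
          rw [Function.iterate_succ_apply']
          exact hV _ (orbit_mem m)
  have lower_bound (n : ℕ) : r ^ (n / k) * V x ≤ g (f^[n] x) :=
    calc r ^ (n / k) * V x ≤ V ((f^[k])^[n / k] x) := growth _
      _ ≤ g (f^[n % k] ((f^[k])^[n / k] x)) :=
        hVg _ (orbit_mem _) _ (Nat.mod_lt n (Nat.pos_of_ne_zero hk))
      _ = g (f^[n] x) := by
        rw [← Function.iterate_mul, ← Function.iterate_add_apply, Nat.mod_add_div]
  refine tendsto_atTop_mono lower_bound (Tendsto.atTop_mul_const hpos ?_)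
  exact (tendsto_pow_atTop_atTop_of_one_lt hr).comp (Nat.tendsto_div_const_atTop hk)

/-- The forward orbit of `x` under `f` diverges to infinity in norm. On `ℝ × ℝ` the norm is the
sup norm. -/
def Escapes {E : Type*} [Norm E] (f : E → E) (x : E) : Prop :=
  Tendsto (fun n => ‖f^[n] x‖) atTop atTop

theorem Escapes.of_apply {E : Type*} [Norm E] {f : E → E} {x : E} (h : Escapes f (f x)) :
    Escapes f x :=
  (tendsto_add_atTop_iff_nat 1).1 h

theorem abs_fst_add_snd_div_two_le_norm (z : ℝ × ℝ) : |z.1 + z.2| / 2 ≤ ‖z‖ := by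
  have hfst : |z.1| ≤ ‖z‖ := norm_fst_le z
  have hsnd : |z.2| ≤ ‖z‖ := norm_snd_le z
  linarith [abs_add_le z.1 z.2]

section FixedPoint

variable {a c : ℝ}

theorem mapsTo_fc_Ici_prod_Ici (ha : 0 ≤ a) (hfix : a * a + c = a) :
    MapsTo (fc c) (Ici a ×ˢ Ici a) (Ici a ×ˢ Ici a) := by
  rintro ⟨x, y⟩ ⟨hx : a ≤ x, hy : a ≤ y⟩
  have hprod : a * a ≤ x * y := mul_le_mul hx hy ha (ha.trans hx)
  exact ⟨show a ≤ x * y + c by linarith, hx⟩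

theorem mul_mean_sub_le_mean_fc_sub (hfix : a * a + c = a) {z : ℝ × ℝ}
    (hz : z ∈ Ici a ×ˢ Ici a) :
    a * ((z.1 + z.2) / 2 - a) ≤ ((fc c z).1 + (fc c z).2) / 2 - a := by
  obtain ⟨x, y⟩ := z
  obtain ⟨hx : a ≤ x, hy : a ≤ y⟩ := hz
  have hprod : 0 ≤ (x - a) * (y - a) := mul_nonneg (sub_nonneg.2 hx) (sub_nonneg.2 hy)
  simp only [fc]
  linarith

theorem escapes_fc_of_mem_Ici_prod_Ici (ha : 1 < a) (hfix : a * a + c = a) {z : ℝ × ℝ}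
    (hz : z ∈ Ici a ×ˢ Ici a) (hne : z ≠ (a, a)) : Escapes (fc c) z := by
  refine tendsto_iterate_atTop_of_mul_le (V := fun w => (w.1 + w.2) / 2 - a) one_ne_zero ha
    (mapsTo_fc_Ici_prod_Ici (by linarith) hfix)
    (fun w hw => mul_mean_sub_le_mean_fc_sub hfix hw) (fun w _ i hi => ?_) hz ?_
  · obtain rfl : i = 0 := Nat.lt_one_iff.1 hi
    change (w.1 + w.2) / 2 - a ≤ ‖w‖
    linarith [le_abs_self (w.1 + w.2), abs_fst_add_snd_div_two_le_norm w]
  · obtain ⟨hx : a ≤ z.1, hy : a ≤ z.2⟩ := hz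
    by_contra! hle
    exact hne (Prod.ext (by linarith) (by linarith))

theorem a2_mul_self_add (hc : c ≤ 1 / 4) : a2 c * a2 c + c = a2 c := by
  have hsq : √(1 - 4 * c) * √(1 - 4 * c) = 1 - 4 * c := Real.mul_self_sqrt (by linarith)
  unfold a2
  linarith

theorem one_lt_a2 (hc : c < 0) : 1 < a2 c := by
  have hsqrt : 1 < √(1 - 4 * c) := Real.lt_sqrt_of_sq_lt (by linarith)
  unfold a2
  linarith

end FixedPoint

section ThreeCycle

variable {c : ℝ} {z : ℝ × ℝ}

theorem le_fc_fst_of_mem_Iic_prod_Iic (hz : z ∈ Iic (-1 : ℝ) ×ˢ Iic (-1 : ℝ)) :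
    c - 1 - z.1 - z.2 ≤ (fc c z).1 := by
  obtain ⟨hx : z.1 ≤ -1, hy : z.2 ≤ -1⟩ := hz
  have hprod : 0 ≤ (-1 - z.1) * (-1 - z.2) := mul_nonneg (by linarith) (by linarith)
  simp only [fc]
  linarith

theorem fc_fst_le_of_mem_Ici_prod_Iic (hc : -1 ≤ c) (hz : z ∈ Ici (1 + c) ×ˢ Iic (-1 : ℝ)) :
    (fc c z).1 ≤ c - z.1 := by
  obtain ⟨hx : 1 + c ≤ z.1, hy : z.2 ≤ -1⟩ := hz
  have hprod : 0 ≤ z.1 * (-1 - z.2) := mul_nonneg (by linarith) (by linarith)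
  simp only [fc]
  linarith

theorem fc_fst_le_of_mem_Iic_prod_Ici (hc : -1 ≤ c) (hz : z ∈ Iic (-1 : ℝ) ×ˢ Ici (1 + c)) :
    (fc c z).1 ≤ c - z.2 := by
  obtain ⟨hx : z.1 ≤ -1, hy : 1 + c ≤ z.2⟩ := hz
  have hprod : 0 ≤ (-1 - z.1) * z.2 := mul_nonneg (by linarith) (by linarith)
  simp only [fc]
  linarith

theorem mapsTo_fc_Iic_prod_Iic :
    MapsTo (fc c) (Iic (-1 : ℝ) ×ˢ Iic (-1 : ℝ)) (Ici (1 + c) ×ˢ Iic (-1 : ℝ)) := by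
  intro z hz
  have hfst := le_fc_fst_of_mem_Iic_prod_Iic (c := c) hz
  obtain ⟨hx : z.1 ≤ -1, hy : z.2 ≤ -1⟩ := hz
  exact ⟨show 1 + c ≤ (fc c z).1 by linarith, hx⟩

theorem mapsTo_fc_Ici_prod_Iic (hc : -1 ≤ c) :
    MapsTo (fc c) (Ici (1 + c) ×ˢ Iic (-1 : ℝ)) (Iic (-1 : ℝ) ×ˢ Ici (1 + c)) := by
  intro z hz
  have hfst := fc_fst_le_of_mem_Ici_prod_Iic hc hz
  have hx : 1 + c ≤ z.1 := hz.1
  exact ⟨show (fc c z).1 ≤ -1 by linarith, hx⟩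

theorem mapsTo_fc_Iic_prod_Ici (hc : -1 ≤ c) :
    MapsTo (fc c) (Iic (-1 : ℝ) ×ˢ Ici (1 + c)) (Iic (-1 : ℝ) ×ˢ Iic (-1 : ℝ)) := by
  intro z hz
  have hfst := fc_fst_le_of_mem_Iic_prod_Ici hc hz
  have hy : 1 + c ≤ z.2 := hz.2
  exact ⟨show (fc c z).1 ≤ -1 by linarith, hz.1⟩

theorem fc_fc_fst_le_of_mem_Iic_prod_Iic (hc : -1 ≤ c)
    (hz : z ∈ Iic (-1 : ℝ) ×ˢ Iic (-1 : ℝ)) : (fc c (fc c z)).1 ≤ 1 + z.1 + z.2 := by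
  have hfirst := le_fc_fst_of_mem_Iic_prod_Iic (c := c) hz
  have hsecond := fc_fst_le_of_mem_Ici_prod_Iic hc (mapsTo_fc_Iic_prod_Iic hz)
  linarith

theorem two_mul_neg_one_sub_mean_le_iterate_three (hc : -1 ≤ c)
    (hz : z ∈ Iic (-1 : ℝ) ×ˢ Iic (-1 : ℝ)) :
    2 * (-1 - (z.1 + z.2) / 2) ≤ -1 - (((fc c)^[3] z).1 + ((fc c)^[3] z).2) / 2 := by
  have hfirst := le_fc_fst_of_mem_Iic_prod_Iic (c := c) hz
  have hsecond := fc_fc_fst_le_of_mem_Iic_prod_Iic hc hz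
  have hthird : (fc c (fc c (fc c z))).1 ≤ c - (fc c z).1 :=
    fc_fst_le_of_mem_Iic_prod_Ici hc (mapsTo_fc_Ici_prod_Iic hc (mapsTo_fc_Iic_prod_Iic hz))
  change _ ≤ -1 - ((fc c (fc c (fc c z))).1 + (fc c (fc c z)).1) / 2
  linarith

theorem neg_one_sub_mean_le_norm_iterate (hc : -1 ≤ c)
    (hz : z ∈ Iic (-1 : ℝ) ×ˢ Iic (-1 : ℝ)) {i : ℕ} (hi : i < 3) :
    -1 - (z.1 + z.2) / 2 ≤ ‖(fc c)^[i] z‖ := by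
  have hfirst := le_fc_fst_of_mem_Iic_prod_Iic (c := c) hz
  have hsecond := fc_fc_fst_le_of_mem_Iic_prod_Iic hc hz
  obtain ⟨hx : z.1 ≤ -1, hy : z.2 ≤ -1⟩ := hz
  interval_cases i
  · change _ ≤ ‖z‖
    linarith [neg_le_abs (z.1 + z.2), abs_fst_add_snd_div_two_le_norm z]
  · calc -1 - (z.1 + z.2) / 2 ≤ (fc c z).1 := by linarith
      _ ≤ |(fc c z).1| := le_abs_self _
      _ ≤ ‖fc c z‖ := norm_fst_le (fc c z)
  · calc -1 - (z.1 + z.2) / 2 ≤ -(fc c (fc c z)).1 := by linarith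
      _ ≤ |(fc c (fc c z)).1| := neg_le_abs _
      _ ≤ ‖fc c (fc c z)‖ := norm_fst_le (fc c (fc c z))

theorem escapes_fc_of_mem_Iic_prod_Iic (hc : -1 ≤ c)
    (hz : z ∈ Iic (-1 : ℝ) ×ˢ Iic (-1 : ℝ)) (hne : z ≠ (-1, -1)) : Escapes (fc c) z := by
  refine tendsto_iterate_atTop_of_mul_le (V := fun w => -1 - (w.1 + w.2) / 2) three_ne_zero
    one_lt_two
    ((mapsTo_fc_Iic_prod_Ici hc).comp ((mapsTo_fc_Ici_prod_Iic hc).comp mapsTo_fc_Iic_prod_Iic))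
    (fun w hw => two_mul_neg_one_sub_mean_le_iterate_three hc hw)
    (fun w hw i hi => neg_one_sub_mean_le_norm_iterate hc hw hi) hz ?_
  obtain ⟨hx : z.1 ≤ -1, hy : z.2 ≤ -1⟩ := hz
  by_contra! hle
  exact hne (Prod.ext (by linarith) (by linarith))

theorem eq_of_fc_eq_fc {w : ℝ × ℝ} (hw : w.1 ≠ 0) (h : fc c z = fc c w) : z = w := by
  obtain ⟨hprod, hfst⟩ : z.1 * z.2 + c = w.1 * w.2 + c ∧ z.1 = w.1 := Prod.ext_iff.1 h
  rw [hfst] at hprod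
  exact Prod.ext hfst (mul_left_cancel₀ hw (add_right_cancel hprod))

theorem escapes_fc_of_mem_Iic_prod_Ici (hc : -1 ≤ c)
    (hz : z ∈ Iic (-1 : ℝ) ×ˢ Ici (1 + c)) (hne : z ≠ (-1, 1 + c)) : Escapes (fc c) z := by
  have hcycle : fc c (-1, 1 + c) = (-1, -1) := by simp [fc]
  refine (escapes_fc_of_mem_Iic_prod_Iic hc (mapsTo_fc_Iic_prod_Ici hc hz) fun h => ?_).of_apply
  exact hne (eq_of_fc_eq_fc (by simp) (h.trans hcycle.symm))

theorem escapes_fc_of_mem_Ici_prod_Iic (hc : -1 < c)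
    (hz : z ∈ Ici (1 + c) ×ˢ Iic (-1 : ℝ)) (hne : z ≠ (1 + c, -1)) : Escapes (fc c) z := by
  have hcycle : fc c (1 + c, -1) = (-1, 1 + c) := by simp [fc]
  have hfst : 1 + c ≠ 0 := by linarith
  refine (escapes_fc_of_mem_Iic_prod_Ici hc.le (mapsTo_fc_Ici_prod_Iic hc.le hz)
    fun h => ?_).of_apply
  exact hne (eq_of_fc_eq_fc hfst (h.trans hcycle.symm))

end ThreeCycle

theorem stmt2 (c : ℝ) (hc1 : -1 < c) (hc2 : c < 0) (z : ℝ × ℝ)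
    (hz : z ∈ (Ici (a2 c) ×ˢ Ici (a2 c) ∪ Iic (-1 : ℝ) ×ˢ Ici (1 + c) ∪
          Iic (-1 : ℝ) ×ˢ Iic (-1 : ℝ) ∪ Ici (1 + c) ×ˢ Iic (-1 : ℝ)) \
        {((a2 c, a2 c) : ℝ × ℝ), (-1, -1), (1 + c, -1), (-1, 1 + c)}) :
    Tendsto (fun n => max |((fc c)^[n] z).1| |((fc c)^[n] z).2|) atTop atTop := by
  change Escapes (fc c) z
  obtain ⟨hmem, hexcl⟩ := hz
  simp only [mem_insert_iff, mem_singleton_iff, not_or] at hexcl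
  obtain ⟨hθ, hp, hfp, hffp⟩ := hexcl
  rcases hmem with ((hL | hM) | hN) | hP
  · exact escapes_fc_of_mem_Ici_prod_Ici (one_lt_a2 hc2) (a2_mul_self_add (by linarith)) hL hθ
  · exact escapes_fc_of_mem_Iic_prod_Ici hc1.le hM hffp
  · exact escapes_fc_of_mem_Iic_prod_Iic hc1.le hN hp
  · exact escapes_fc_of_mem_Ici_prod_Iic hc1 hP hfp
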